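/- arXiv:1706.01281 — 3 statements merged into one kernel-verified Lean document; each statement's English description precedes it below -/
import Mathlib

section
/- Let N ≥ 1, d ≥ 2, let Ω ⊆ ℝ^N be an open set, let n₀ : Ω → S^{d-1} be a Lebesgue-measurable map, and let (ρ_k) be a sequence of mollifiers. Then there exists a Lebesgue-measurable map n : Ω → S^{d-1} with n(x) ∈ {n₀(x), −n₀(x)} for a.e. x ∈ Ω, such that liminf_{k→∞} ∬_{Ω×Ω} ‖n(x) − n(y)‖_{ℝ^d} / |x−y| · ρ_k(|x−y|) dx dy ≤ (1 + 2/π) · liminf_{k→∞} ∬_{Ω×Ω} (1/√2)·‖n₀(x)⊗n₀(x) − n₀(y)⊗n₀(y)‖ / |x−y| · ρ_k(|x−y|) dx dy, where all double integrals are Lebesgue integrals with values in [0,∞]. -/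
/-!
STATEMENT 1: Euclidean BV-lifting estimate (measurable/mollified formulation) with the
optimal constant 1 + 2/π, for the physical (tensorial) isometric embedding
`[n] ↦ (1/√2) n ⊗ n` of `ℝP^{d-1}` into the space of `d × d` matrices.
-/

noncomputable section
open MeasureTheory Real Filter
open scoped ENNReal RealInnerProductSpace

/-- The Frobenius (Euclidean) norm of a `d × d` real matrix. -/
def frobNorm {d : ℕ} (A : Fin d → Fin d → ℝ) : ℝ := Real.sqrt (∑ i, ∑ j, (A i j) ^ 2)

/-- The tensor (outer) product `v ⊗ w` of two vectors, as a `d × d` matrix. -/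
def outer {d : ℕ} (v w : EuclideanSpace ℝ (Fin d)) : Fin d → Fin d → ℝ := fun i j => v i * w j

/-!
Fix a direction `e` and replace every `n₀ x` by its representative `± n₀ x` in the half-space
`{v | 0 ≤ ⟪v, e⟫}`. For a random `e` with rotation-invariant law, the hyperplane `e^⊥` separates
two unit vectors at angle `θ` with probability `θ / π`, so the expected distance between their
representatives is `(1 - θ / π) * 2 sin (θ / 2) + (θ / π) * 2 cos (θ / 2) ≤ (1 + 2 / π) sin θ`,
and `sin θ` is the distance of the two lines in the tensorial embedding. Tonelli and Fatou then
yield one direction `e` whose lift satisfies the estimate along the whole sequence of kernels.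
-/

open Function InnerProductGeometry
open scoped NNReal symmDiff

theorem sq_mul_cos_le_sin_sq {t : ℝ} (h₀ : 0 ≤ t) (hπ : t < π) : t ^ 2 * cos t ≤ sin t ^ 2 := by
  obtain ⟨s, rfl⟩ : ∃ s, t = 2 * s := ⟨t / 2, by ring⟩
  have hs₀ : 0 ≤ s := by linarith
  have hcos : 0 < cos s := cos_pos_of_mem_Ioo ⟨by linarith, by linarith⟩
  have hsin : s * cos s ≤ sin s := by
    simpa only [tan_eq_sin_div_cos, le_div_iff₀ hcos] using le_tan hs₀ (by linarith)
  have hsq : 2 * cos s ^ 2 - 1 ≤ cos s ^ 4 := by linarith [sq_nonneg (1 - cos s ^ 2)]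
  calc (2 * s) ^ 2 * cos (2 * s) = 4 * s ^ 2 * (2 * cos s ^ 2 - 1) := by rw [cos_two_mul]; ring
    _ ≤ 4 * s ^ 2 * cos s ^ 4 := by gcongr
    _ = 4 * (s * cos s) ^ 2 * cos s ^ 2 := by ring
    _ ≤ 4 * sin s ^ 2 * cos s ^ 2 := by gcongr
    _ = sin (2 * s) ^ 2 := by rw [sin_two_mul]; ring

theorem monotoneOn_inv_sin_sub_inv : MonotoneOn (fun t => (sin t)⁻¹ - t⁻¹) (Set.Ioo 0 π) := by
  have hderiv : ∀ t ∈ Set.Ioo 0 π, HasDerivAt (fun t => (sin t)⁻¹ - t⁻¹)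
      (-cos t / sin t ^ 2 - -(t ^ 2)⁻¹) t := fun t ht =>
    ((hasDerivAt_sin t).inv (sin_pos_of_mem_Ioo ht).ne').sub (hasDerivAt_inv ht.1.ne')
  refine monotoneOn_of_hasDerivWithinAt_nonneg (convex_Ioo 0 π)
    (fun t ht => (hderiv t ht).continuousAt.continuousWithinAt)
    (fun t ht => (hderiv t (interior_subset ht)).hasDerivWithinAt) fun t ht => ?_
  obtain ⟨h₀, hπ⟩ := interior_subset ht
  have hsin : 0 < sin t := sin_pos_of_pos_of_lt_pi h₀ hπ
  have hle : cos t / sin t ^ 2 ≤ (t ^ 2)⁻¹ := by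
    rw [inv_eq_one_div, div_le_div_iff₀ (by positivity) (by positivity)]
    linarith [sq_mul_cos_le_sin_sq h₀.le hπ]
  rw [neg_div]
  linarith

theorem le_sin_mul_one_add {t : ℝ} (h₀ : 0 ≤ t) (hπ : t ≤ π / 2) :
    t ≤ sin t * (1 + (1 - 2 / π) * t) := by
  rcases h₀.eq_or_lt with rfl | h₀
  · simp
  have ht : t ∈ Set.Ioo 0 π := ⟨h₀, by linarith [pi_pos]⟩
  have hinv : (sin t)⁻¹ - t⁻¹ ≤ 1 - 2 / π := by
    simpa only [sin_pi_div_two, inv_one, inv_div] using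
      monotoneOn_inv_sin_sub_inv ht ⟨pi_div_two_pos, div_two_lt_of_pos pi_pos⟩ hπ
  have hsin : 0 < sin t := sin_pos_of_mem_Ioo ht
  calc t = sin t * (1 + ((sin t)⁻¹ - t⁻¹) * t) := by field_simp; ring
    _ ≤ sin t * (1 + (1 - 2 / π) * t) := by gcongr

theorem interpolated_chord_le_mul_sin {θ : ℝ} (h₀ : 0 ≤ θ) (hπ : θ ≤ π) :
    (1 - θ / π) * (2 * sin (θ / 2)) + θ / π * (2 * cos (θ / 2)) ≤ (1 + 2 / π) * sin θ := by
  obtain ⟨t, rfl⟩ : ∃ t, θ = 2 * t := ⟨θ / 2, by ring⟩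
  rw [mul_div_cancel_left₀ t two_ne_zero]
  have hsin : 0 ≤ sin t := sin_nonneg_of_nonneg_of_le_pi (by linarith) (by linarith)
  have hcos : 0 ≤ cos t := cos_nonneg_of_mem_Icc ⟨by linarith, by linarith⟩
  have ht : t ≤ sin t * (1 + (1 - 2 / π) * t) := le_sin_mul_one_add (by linarith) (by linarith)
  have ht' : π / 2 - t ≤ cos t * (1 + (1 - 2 / π) * (π / 2 - t)) := by
    simpa only [sin_pi_div_two_sub] using
      le_sin_mul_one_add (t := π / 2 - t) (by linarith) (by linarith)
  calc (1 - 2 * t / π) * (2 * sin t) + 2 * t / π * (2 * cos t)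
      = 4 / π * (t * cos t + (π / 2 - t) * sin t) := by field_simp; ring
    _ ≤ 4 / π * (sin t * (1 + (1 - 2 / π) * t) * cos t
          + cos t * (1 + (1 - 2 / π) * (π / 2 - t)) * sin t) := by gcongr
    _ = (1 + 2 / π) * sin (2 * t) := by rw [sin_two_mul]; field_simp; ring

theorem eq_zero_of_forall_exists_abs_eq_two_mul {α : Type*} {s : Set α} {f : α → ℝ} {C : ℝ}
    (hbdd : ∀ x ∈ s, |f x| ≤ C) (hdouble : ∀ x ∈ s, ∃ y ∈ s, |f y| = 2 * |f x|) :
    ∀ x ∈ s, f x = 0 := by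
  have hpow : ∀ k : ℕ, ∀ x ∈ s, |f x| ≤ C * (1 / 2) ^ k := by
    intro k
    induction k with
    | zero => simpa only [pow_zero, mul_one] using hbdd
    | succ k ih =>
      intro x hx
      obtain ⟨y, hy, hxy⟩ := hdouble x hx
      rw [pow_succ]
      linarith [ih y hy]
  have hlim : Tendsto (fun k : ℕ => C * (1 / 2 : ℝ) ^ k) atTop (nhds 0) := by
    simpa only [mul_zero] using
      (tendsto_pow_atTop_nhds_zero_of_lt_one (by norm_num) (by norm_num)).const_mul C
  exact fun x hx => abs_nonpos_iff.mp (ge_of_tendsto' hlim fun k => hpow k x hx)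

theorem measureReal_symmDiff_eq_add {α : Type*} [MeasurableSpace α] {μ : Measure α}
    [IsFiniteMeasure μ] {A B C : Set α} (hB : MeasurableSet B) (hC : MeasurableSet C)
    (hinter : A ∩ C ⊆ B) (hunion : B ⊆ A ∪ C) :
    μ.real (A ∆ C) = μ.real (A ∆ B) + μ.real (B ∆ C) := by
  have hmem : ∀ x, (x ∈ A → x ∈ C → x ∈ B) ∧ (x ∈ B → x ∈ A ∨ x ∈ C) := fun x =>
    ⟨fun hxA hxC => hinter ⟨hxA, hxC⟩, fun hxB => hunion hxB⟩
  have hdisj : Disjoint (A ∆ B) (B ∆ C) := by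
    refine Set.disjoint_left.mpr fun x => ?_
    have := hmem x
    simp only [Set.mem_symmDiff]
    tauto
  have heq : A ∆ C = A ∆ B ∪ B ∆ C := by
    ext x
    have := hmem x
    simp only [Set.mem_symmDiff, Set.mem_union]
    tauto
  rw [heq, measureReal_union hdisj (hB.symmDiff hC)]

section InnerProductSpace

variable {E : Type*} [NormedAddCommGroup E] [InnerProductSpace ℝ E]

theorem norm_sub_eq_two_mul_norm_mul_sin_half_angle {a b : E} (h : ‖a‖ = ‖b‖) :
    ‖a - b‖ = 2 * ‖a‖ * sin (angle a b / 2) := by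
  have hsin : 0 ≤ sin (angle a b / 2) := sin_nonneg_of_nonneg_of_le_pi
    (by linarith [angle_nonneg a b]) (by linarith [angle_le_pi a b, angle_nonneg a b])
  have hcos : cos (angle a b) = 1 - 2 * sin (angle a b / 2) ^ 2 := by
    rw [sin_sq_eq_half_sub, mul_div_cancel₀ _ two_ne_zero]
    ring
  rw [← sq_eq_sq₀ (norm_nonneg _) (by positivity), pow_two,
    norm_sub_sq_eq_norm_sq_add_norm_sq_sub_two_mul_norm_mul_norm_mul_cos_angle, hcos, ← h]
  ring

theorem norm_add_eq_two_mul_norm_mul_cos_half_angle {a b : E} (h : ‖a‖ = ‖b‖) :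
    ‖a + b‖ = 2 * ‖a‖ * cos (angle a b / 2) := by
  have hneg := norm_sub_eq_two_mul_norm_mul_sin_half_angle (h.trans (norm_neg b).symm)
  rwa [sub_neg_eq_add, angle_neg_right, sub_div, sin_pi_div_two_sub] at hneg

/-- The closed half-space of the directions `e` with `0 ≤ ⟪a, e⟫`; it is all of `E` for `a = 0`.
The directions whose orthogonal hyperplane separates `a` from `b` form `halfSpace a ∆ halfSpace b`,
up to those lying on the boundary of one of the two half-spaces. -/
def halfSpace (a : E) : Set E := {e | 0 ≤ ⟪a, e⟫}

theorem mem_halfSpace {a e : E} : e ∈ halfSpace a ↔ 0 ≤ ⟪a, e⟫ := Iff.rfl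

theorem preimage_halfSpace_map (T : E ≃ₗᵢ[ℝ] E) (a : E) :
    T ⁻¹' halfSpace (T a) = halfSpace a := by
  ext e
  simp only [Set.mem_preimage, mem_halfSpace, LinearIsometryEquiv.inner_map_map]

theorem halfSpace_inter_subset {a b c : E} (h : b ∈ Submodule.span ℝ≥0 {a, c}) :
    halfSpace a ∩ halfSpace c ⊆ halfSpace b := by
  obtain ⟨k, l, rfl⟩ := Submodule.mem_span_pair.mp h
  rintro e ⟨ha, hc⟩
  rw [mem_halfSpace] at ha hc
  rw [mem_halfSpace, inner_add_left, NNReal.smul_def, NNReal.smul_def, real_inner_smul_left,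
    real_inner_smul_left]
  positivity

theorem halfSpace_subset_union {a b c : E} (hb : b ≠ 0) (h : b ∈ Submodule.span ℝ≥0 {a, c}) :
    halfSpace b ⊆ halfSpace a ∪ halfSpace c := by
  obtain ⟨k, l, rfl⟩ := Submodule.mem_span_pair.mp h
  intro e he
  by_contra hac
  simp only [Set.mem_union, mem_halfSpace, not_or, not_le] at hac
  obtain ⟨ha, hc⟩ := hac
  rw [mem_halfSpace, inner_add_left, NNReal.smul_def, NNReal.smul_def, real_inner_smul_left,
    real_inner_smul_left] at he
  have hk : k = 0 := by
    by_contra hk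
    nlinarith [mul_neg_of_pos_of_neg (NNReal.coe_pos.mpr (pos_of_ne_zero hk)) ha,
      mul_nonpos_of_nonneg_of_nonpos l.coe_nonneg hc.le]
  have hl : l = 0 := by
    by_contra hl
    nlinarith [mul_neg_of_pos_of_neg (NNReal.coe_pos.mpr (pos_of_ne_zero hl)) hc,
      mul_nonpos_of_nonneg_of_nonpos k.coe_nonneg ha.le]
  exact hb (by rw [hk, hl, zero_smul, zero_smul, add_zero])

theorem mem_span_pair_reflection {a b : E} (h : 0 < ⟪a, b⟫) :
    b ∈ Submodule.span ℝ≥0 {a, (ℝ ∙ b).reflection a} := by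
  have hb : ‖b‖ ≠ 0 := norm_ne_zero_iff.mpr (by rintro rfl; simp at h)
  let k : ℝ≥0 := ⟨‖b‖ ^ 2 / (2 * ⟪a, b⟫), by positivity⟩
  refine Submodule.mem_span_pair.mpr ⟨k, k, ?_⟩
  have hk : (k : ℝ) * (2 * (⟪a, b⟫ / ‖b‖ ^ 2)) = 1 := by
    change ‖b‖ ^ 2 / (2 * ⟪a, b⟫) * (2 * (⟪a, b⟫ / ‖b‖ ^ 2)) = 1
    field_simp
  rw [← smul_add, Submodule.reflection_singleton_apply, RCLike.ofReal_real_eq_id, id_eq,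
    add_sub_cancel, real_inner_comm, two_smul, ← two_smul ℝ, NNReal.smul_def, smul_smul, smul_smul,
    mul_assoc, hk, one_smul]

/-- The vector among `v` and `-v` that has nonnegative inner product with `e`, that is, the lift
of the line of `v` selected by the direction `e`; the tie `⟪v, e⟫ = 0` is resolved to `v`. -/
def orient (e v : E) : E := if 0 ≤ ⟪v, e⟫ then v else -v

theorem orient_eq_or_eq_neg (e v : E) : orient e v = v ∨ orient e v = -v :=
  ite_eq_or_eq _ _ _

theorem enorm_orient_sub_of_mem {a b e : E} (he : e ∈ halfSpace a ∆ halfSpace b) :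
    ‖orient e a - orient e b‖ₑ = ‖a + b‖ₑ := by
  rw [Set.mem_symmDiff, mem_halfSpace, mem_halfSpace] at he
  rcases he with ⟨ha, hb⟩ | ⟨hb, ha⟩
  · rw [orient, orient, if_pos ha, if_neg hb, sub_neg_eq_add]
  · rw [orient, orient, if_neg ha, if_pos hb, ← neg_add', enorm_neg]

theorem enorm_orient_sub_of_notMem {a b e : E} (he : e ∉ halfSpace a ∆ halfSpace b) :
    ‖orient e a - orient e b‖ₑ = ‖a - b‖ₑ := by
  rw [Set.mem_symmDiff, mem_halfSpace, mem_halfSpace] at he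
  by_cases ha : 0 ≤ ⟪a, e⟫
  · have hb : 0 ≤ ⟪b, e⟫ := by tauto
    rw [orient, orient, if_pos ha, if_pos hb]
  · have hb : ¬ 0 ≤ ⟪b, e⟫ := by tauto
    rw [orient, orient, if_neg ha, if_neg hb, ← neg_sub', enorm_neg]

variable [MeasurableSpace E]

/-- A measure on a Euclidean space is isotropic if it is invariant under all linear isometries and
does not charge hyperplanes through the origin. An isotropic probability measure serves as the law
of a uniformly distributed random direction. -/
structure IsIsotropic (μ : Measure E) : Prop where
  measurePreserving (T : E ≃ₗᵢ[ℝ] E) : MeasurePreserving T μ μ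
  measure_inner_eq_zero {a : E} (ha : a ≠ 0) : μ {e | ⟪a, e⟫ = 0} = 0

/-- The excess over `angle a b / π` of the probability that the hyperplane orthogonal to a
`μ`-random direction separates `a` from `b`. It vanishes for isotropic `μ` unless `b = 0`. -/
def crossingDefect (μ : Measure E) (a b : E) : ℝ :=
  μ.real (halfSpace a ∆ halfSpace b) - angle a b / π

theorem crossingDefect_comm (μ : Measure E) (a b : E) :
    crossingDefect μ a b = crossingDefect μ b a := by
  rw [crossingDefect, crossingDefect, symmDiff_comm, angle_comm]

theorem abs_crossingDefect_le_one (μ : Measure E) [IsProbabilityMeasure μ] (a b : E) :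
    |crossingDefect μ a b| ≤ 1 :=
  abs_sub_le_of_nonneg_of_le measureReal_nonneg measureReal_le_one
    (div_nonneg (angle_nonneg a b) pi_nonneg) (div_le_one_of_le₀ (angle_le_pi a b) pi_nonneg)

theorem IsIsotropic.halfSpace_neg_ae_eq {μ : Measure E} (hμ : IsIsotropic μ) {b : E} (hb : b ≠ 0) :
    halfSpace (-b) =ᵐ[μ] (halfSpace b)ᶜ := by
  have hne : ∀ᵐ e ∂μ, ⟪b, e⟫ ≠ 0 := by
    simpa only [ae_iff, not_not] using hμ.measure_inner_eq_zero hb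
  filter_upwards [hne] with e he
  refine propext ?_
  change 0 ≤ ⟪-b, e⟫ ↔ ¬ 0 ≤ ⟪b, e⟫
  rw [inner_neg_left, neg_nonneg, not_le, lt_iff_le_and_ne, and_iff_left he]

variable [BorelSpace E]

theorem measurableSet_halfSpace (a : E) : MeasurableSet (halfSpace a) :=
  (isClosed_le continuous_const (by fun_prop)).measurableSet

theorem measurable_orient [SecondCountableTopology E] :
    Measurable fun p : E × E => orient p.1 p.2 :=
  Measurable.ite (isClosed_le continuous_const (by fun_prop)).measurableSet measurable_snd
    measurable_snd.neg

theorem crossingDefect_eq_add (μ : Measure E) [IsFiniteMeasure μ] {a b c : E} (hb : b ≠ 0)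
    (h : b ∈ Submodule.span ℝ≥0 {a, c}) :
    crossingDefect μ a c = crossingDefect μ a b + crossingDefect μ b c := by
  simp only [crossingDefect, angle_eq_angle_add_add_angle_add_of_mem_span hb h,
    measureReal_symmDiff_eq_add (measurableSet_halfSpace b) (measurableSet_halfSpace c)
      (halfSpace_inter_subset h) (halfSpace_subset_union hb h)]
  ring

namespace IsIsotropic

variable {μ : Measure E} (hμ : IsIsotropic μ)
include hμ

theorem crossingDefect_map (T : E ≃ₗᵢ[ℝ] E) (a b : E) :
    crossingDefect μ (T a) (T b) = crossingDefect μ a b := by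
  have hpre : T ⁻¹' (halfSpace (T a) ∆ halfSpace (T b)) = halfSpace a ∆ halfSpace b := by
    rw [Set.preimage_symmDiff, preimage_halfSpace_map, preimage_halfSpace_map]
  have hangle : angle (T a) (T b) = angle a b := T.toLinearIsometry.angle_map a b
  have hmeas : MeasurableSet (halfSpace (T a) ∆ halfSpace (T b)) :=
    (measurableSet_halfSpace _).symmDiff (measurableSet_halfSpace _)
  rw [crossingDefect, crossingDefect, hangle, ← hpre,
    (hμ.measurePreserving T).measureReal_preimage hmeas.nullMeasurableSet]

variable [IsProbabilityMeasure μ]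

theorem crossingDefect_neg_right (a : E) {b : E} (hb : b ≠ 0) :
    crossingDefect μ a (-b) = -crossingDefect μ a b := by
  have hmeas : MeasurableSet (halfSpace a ∆ halfSpace b) :=
    (measurableSet_halfSpace a).symmDiff (measurableSet_halfSpace b)
  have hcompl : halfSpace a ∆ (halfSpace b)ᶜ = (halfSpace a ∆ halfSpace b)ᶜ := by
    ext e
    simp only [Set.mem_symmDiff, Set.mem_compl_iff]
    tauto
  have hprob : μ.real (halfSpace a ∆ halfSpace (-b)) = 1 - μ.real (halfSpace a ∆ halfSpace b) := by
    rw [← probReal_compl_eq_one_sub hmeas, ← hcompl]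
    exact measureReal_congr ((ae_eq_refl _).symmDiff (hμ.halfSpace_neg_ae_eq hb))
  rw [crossingDefect, crossingDefect, hprob, angle_neg_right]
  field_simp
  ring

theorem crossingDefect_eq_zero_of_inner_eq_zero {a b : E} (hb : b ≠ 0) (hab : ⟪a, b⟫ = 0) :
    crossingDefect μ a b = 0 := by
  have ha : (ℝ ∙ b).reflection a = -a :=
    Submodule.reflection_mem_subspace_orthogonalComplement_eq_neg
      (Submodule.mem_orthogonal_singleton_iff_inner_left.mpr hab)
  have hflip : crossingDefect μ (-a) b = crossingDefect μ a b := by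
    simpa only [ha, Submodule.reflection_mem_subspace_eq_self
      (Submodule.mem_span_singleton_self b)] using hμ.crossingDefect_map (ℝ ∙ b).reflection a b
  have hneg : crossingDefect μ a (-b) = crossingDefect μ (-a) b := by
    simpa only [LinearIsometryEquiv.coe_neg, neg_neg] using
      hμ.crossingDefect_map (LinearIsometryEquiv.neg ℝ) (-a) b
  linarith [hμ.crossingDefect_neg_right a hb]

theorem crossingDefect_reflection {a b : E} (hab : 0 < ⟪a, b⟫) :
    crossingDefect μ a ((ℝ ∙ b).reflection a) = 2 * crossingDefect μ a b := by
  have hb : b ≠ 0 := by rintro rfl; simp at hab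
  have hmap : crossingDefect μ ((ℝ ∙ b).reflection a) b = crossingDefect μ a b := by
    simpa only [Submodule.reflection_mem_subspace_eq_self
      (Submodule.mem_span_singleton_self b)] using hμ.crossingDefect_map (ℝ ∙ b).reflection a b
  rw [crossingDefect_eq_add μ hb (mem_span_pair_reflection hab), crossingDefect_comm μ b, hmap]
  ring

-- Reflecting `a` across the line of `±b` doubles an acute angle, and the defect is additive in the
-- angle; as it is also bounded, it has to vanish.
theorem exists_abs_crossingDefect_eq_two_mul (a : E) {b : E} (hb : b ≠ 0) :
    ∃ c ≠ 0, |crossingDefect μ a c| = 2 * |crossingDefect μ a b| := by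
  have hne {v : E} (hv : 0 < ⟪a, v⟫) : (ℝ ∙ v).reflection a ≠ 0 := by
    refine (map_ne_zero_iff _ (ℝ ∙ v).reflection.injective).mpr ?_
    rintro rfl
    simp at hv
  rcases lt_trichotomy ⟪a, b⟫ 0 with hab | hab | hab
  · have hneg : 0 < ⟪a, -b⟫ := by rwa [inner_neg_right, neg_pos]
    refine ⟨_, hne hneg, ?_⟩
    rw [hμ.crossingDefect_reflection hneg, hμ.crossingDefect_neg_right a hb, abs_mul, abs_neg,
      abs_two]
  · exact ⟨b, hb, by rw [hμ.crossingDefect_eq_zero_of_inner_eq_zero hb hab, abs_zero, mul_zero]⟩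
  · exact ⟨_, hne hab, by rw [hμ.crossingDefect_reflection hab, abs_mul, abs_two]⟩

theorem measureReal_halfSpace_symmDiff (a : E) {b : E} (hb : b ≠ 0) :
    μ.real (halfSpace a ∆ halfSpace b) = angle a b / π :=
  sub_eq_zero.mp <| eq_zero_of_forall_exists_abs_eq_two_mul (s := {b : E | b ≠ 0})
    (fun b _ => abs_crossingDefect_le_one μ a b)
    (fun _ hb => hμ.exists_abs_crossingDefect_eq_two_mul a hb) b hb

end IsIsotropic

theorem isIsotropic_cond_volume_ball [FiniteDimensional ℝ E] :
    IsIsotropic (ProbabilityTheory.cond (volume : Measure E) (Metric.ball 0 1)) where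
  measurePreserving T := by
    have hT := T.measurePreserving.restrict_preimage (s := Metric.ball 0 1) measurableSet_ball
    rw [LinearIsometryEquiv.preimage_ball, map_zero] at hT
    exact hT.smul_measure _
  measure_inner_eq_zero {a} ha := by
    refine ProbabilityTheory.cond_absolutelyContinuous ?_
    refine Measure.addHaar_submodule volume (LinearMap.ker (innerₛₗ ℝ a)) fun htop => ha ?_
    simpa using htop.ge (Submodule.mem_top (x := a))

theorem exists_isIsotropic_isProbabilityMeasure [FiniteDimensional ℝ E] :
    ∃ μ : Measure E, IsProbabilityMeasure μ ∧ IsIsotropic μ :=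
  ⟨_, ProbabilityTheory.cond_isProbabilityMeasure_of_finite
    (Metric.measure_ball_pos _ _ one_pos).ne' measure_ball_lt_top.ne, isIsotropic_cond_volume_ball⟩

namespace IsIsotropic

variable {μ : Measure E} (hμ : IsIsotropic μ) [IsProbabilityMeasure μ]
include hμ

theorem lintegral_enorm_orient_sub (a : E) {b : E} (hb : b ≠ 0) :
    ∫⁻ e, ‖orient e a - orient e b‖ₑ ∂μ =
      ENNReal.ofReal ((1 - angle a b / π) * ‖a - b‖ + angle a b / π * ‖a + b‖) := by
  have hmeas : MeasurableSet (halfSpace a ∆ halfSpace b) :=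
    (measurableSet_halfSpace a).symmDiff (measurableSet_halfSpace b)
  have hprob := hμ.measureReal_halfSpace_symmDiff a hb
  have hle : 0 ≤ 1 - angle a b / π :=
    sub_nonneg.mpr (div_le_one_of_le₀ (angle_le_pi a b) pi_nonneg)
  have hnonneg : 0 ≤ angle a b / π := div_nonneg (angle_nonneg a b) pi_nonneg
  rw [← lintegral_add_compl _ hmeas,
    setLIntegral_congr_fun hmeas fun e he => enorm_orient_sub_of_mem he,
    setLIntegral_congr_fun hmeas.compl fun e he => enorm_orient_sub_of_notMem he,
    setLIntegral_const, setLIntegral_const, ← ofReal_measureReal, ← ofReal_measureReal,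
    probReal_compl_eq_one_sub hmeas, hprob, ← ofReal_norm, ← ofReal_norm,
    ← ENNReal.ofReal_mul (norm_nonneg _), ← ENNReal.ofReal_mul (norm_nonneg _), add_comm,
    ← ENNReal.ofReal_add (by positivity) (by positivity), mul_comm ‖a - b‖, mul_comm ‖a + b‖]

theorem lintegral_enorm_orient_sub_le {a b : E} (ha : ‖a‖ = 1) (hb : ‖b‖ = 1) :
    ∫⁻ e, ‖orient e a - orient e b‖ₑ ∂μ ≤
      ENNReal.ofReal (1 + 2 / π) * ENNReal.ofReal (sin (angle a b)) := by
  have hab : ‖a‖ = ‖b‖ := ha.trans hb.symm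
  rw [hμ.lintegral_enorm_orient_sub a (norm_ne_zero_iff.mp (hb ▸ one_ne_zero)),
    norm_sub_eq_two_mul_norm_mul_sin_half_angle hab,
    norm_add_eq_two_mul_norm_mul_cos_half_angle hab, ha, mul_one,
    ← ENNReal.ofReal_mul (by positivity)]
  exact ENNReal.ofReal_le_ofReal
    (interpolated_chord_le_mul_sin (angle_nonneg a b) (angle_le_pi a b))

end IsIsotropic

end InnerProductSpace

theorem lintegral_lintegral_lintegral_rotate {α β γ : Type*} [MeasurableSpace α]
    [MeasurableSpace β] [MeasurableSpace γ] {μ : Measure α} {ν : Measure β} {κ : Measure γ}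
    [SFinite μ] [SFinite ν] [SFinite κ] {f : α → β → γ → ℝ≥0∞}
    (hf : Measurable fun p : (α × β) × γ => f p.1.1 p.1.2 p.2) :
    ∫⁻ a, ∫⁻ b, ∫⁻ c, f a b c ∂κ ∂ν ∂μ = ∫⁻ b, ∫⁻ c, ∫⁻ a, f a b c ∂μ ∂κ ∂ν := by
  have hslice (b : β) : Measurable (uncurry fun a c => f a b c) :=
    hf.comp ((measurable_fst.prodMk measurable_const).prodMk measurable_snd)
  calc ∫⁻ a, ∫⁻ b, ∫⁻ c, f a b c ∂κ ∂ν ∂μ = ∫⁻ b, ∫⁻ a, ∫⁻ c, f a b c ∂κ ∂μ ∂ν :=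
        lintegral_lintegral_swap hf.lintegral_prod_right'.aemeasurable
    _ = ∫⁻ b, ∫⁻ c, ∫⁻ a, f a b c ∂μ ∂κ ∂ν :=
        lintegral_congr fun b => lintegral_lintegral_swap (hslice b).aemeasurable

theorem exists_liminf_le_liminf_lintegral {α : Type*} [MeasurableSpace α] (μ : Measure α)
    [IsProbabilityMeasure μ] {F : ℕ → α → ℝ≥0∞} (hF : ∀ k, Measurable (F k)) :
    ∃ e, liminf (fun k => F k e) atTop ≤ liminf (fun k => ∫⁻ e, F k e ∂μ) atTop := by
  obtain ⟨e, he⟩ := exists_le_lintegral (μ := μ) (Measurable.liminf hF).aemeasurable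
  exact ⟨e, he.trans (lintegral_liminf_le hF)⟩

section Lifting

variable {X E : Type*} [MeasurableSpace X] [NormedAddCommGroup E] [InnerProductSpace ℝ E]
  [MeasurableSpace E] [BorelSpace E]

theorem measurable_enorm_orient_sub_mul [SecondCountableTopology E] {n₀ : X → E}
    (hn₀meas : Measurable n₀) {w : X → X → ℝ≥0∞} (hw : Measurable (uncurry w)) :
    Measurable fun p : (E × X) × X =>
      ‖orient p.1.1 (n₀ p.1.2) - orient p.1.1 (n₀ p.2)‖ₑ * w p.1.2 p.2 := by
  have hfst : Measurable fun p : (E × X) × X => orient p.1.1 (n₀ p.1.2) :=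
    measurable_orient.comp (by fun_prop : Measurable fun p : (E × X) × X => (p.1.1, n₀ p.1.2))
  have hsnd : Measurable fun p : (E × X) × X => orient p.1.1 (n₀ p.2) :=
    measurable_orient.comp (by fun_prop : Measurable fun p : (E × X) × X => (p.1.1, n₀ p.2))
  exact (hfst.sub hsnd).enorm.mul
    (hw.comp (by fun_prop : Measurable fun p : (E × X) × X => (p.1.2, p.2)))

theorem IsIsotropic.lintegral_energy_orient_le [SecondCountableTopology E] {μ : Measure E}
    [IsProbabilityMeasure μ] (hμ : IsIsotropic μ) (ν : Measure X) [SFinite ν] {n₀ : X → E}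
    (hn₀meas : Measurable n₀) (hn₀sph : ∀ x, ‖n₀ x‖ = 1) {w : X → X → ℝ≥0∞}
    (hw : Measurable (uncurry w)) :
    ∫⁻ e, ∫⁻ x, ∫⁻ y, ‖orient e (n₀ x) - orient e (n₀ y)‖ₑ * w x y ∂ν ∂ν ∂μ ≤
      ENNReal.ofReal (1 + 2 / π) *
        ∫⁻ x, ∫⁻ y, ENNReal.ofReal (sin (angle (n₀ x) (n₀ y))) * w x y ∂ν ∂ν := by
  have hmeas (x y : X) : Measurable fun e => ‖orient e (n₀ x) - orient e (n₀ y)‖ₑ :=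
    ((measurable_orient.comp measurable_prodMk_right).sub
      (measurable_orient.comp measurable_prodMk_right)).enorm
  calc ∫⁻ e, ∫⁻ x, ∫⁻ y, ‖orient e (n₀ x) - orient e (n₀ y)‖ₑ * w x y ∂ν ∂ν ∂μ
      = ∫⁻ x, ∫⁻ y, ∫⁻ e, ‖orient e (n₀ x) - orient e (n₀ y)‖ₑ * w x y ∂μ ∂ν ∂ν :=
        lintegral_lintegral_lintegral_rotate (measurable_enorm_orient_sub_mul hn₀meas hw)
    _ = ∫⁻ x, ∫⁻ y, (∫⁻ e, ‖orient e (n₀ x) - orient e (n₀ y)‖ₑ ∂μ) * w x y ∂ν ∂ν := by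
        simp only [lintegral_mul_const _ (hmeas _ _)]
    _ ≤ ∫⁻ x, ∫⁻ y, ENNReal.ofReal (1 + 2 / π) *
          ENNReal.ofReal (sin (angle (n₀ x) (n₀ y))) * w x y ∂ν ∂ν := by
        gcongr with x y
        exact hμ.lintegral_enorm_orient_sub_le (hn₀sph x) (hn₀sph y)
    _ = ENNReal.ofReal (1 + 2 / π) *
          ∫⁻ x, ∫⁻ y, ENNReal.ofReal (sin (angle (n₀ x) (n₀ y))) * w x y ∂ν ∂ν := by
        simp only [mul_assoc, lintegral_const_mul' _ _ ENNReal.ofReal_ne_top]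

theorem euclidean_lifting_estimate_general [FiniteDimensional ℝ E] (ν : Measure X) [SFinite ν]
    {n₀ : X → E} (hn₀meas : Measurable n₀) (hn₀sph : ∀ x, ‖n₀ x‖ = 1) {w : ℕ → X → X → ℝ≥0∞}
    (hw : ∀ k, Measurable (uncurry (w k))) :
    ∃ n : X → E, Measurable n ∧ (∀ x, n x = n₀ x ∨ n x = -n₀ x) ∧
      liminf (fun k => ∫⁻ x, ∫⁻ y, ‖n x - n y‖ₑ * w k x y ∂ν ∂ν) atTop ≤
        ENNReal.ofReal (1 + 2 / π) * liminf (fun k => ∫⁻ x, ∫⁻ y,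
          ENNReal.ofReal (sin (angle (n₀ x) (n₀ y))) * w k x y ∂ν ∂ν) atTop := by
  obtain ⟨μ, _, hμ⟩ := exists_isIsotropic_isProbabilityMeasure (E := E)
  have hmeas (k : ℕ) := measurable_enorm_orient_sub_mul hn₀meas (hw k)
  obtain ⟨e, he⟩ := exists_liminf_le_liminf_lintegral μ
    fun k => ((hmeas k).lintegral_prod_right' (ν := ν)).lintegral_prod_right' (ν := ν)
  refine ⟨fun x => orient e (n₀ x), measurable_orient.comp (measurable_const.prodMk hn₀meas),
    fun x => orient_eq_or_eq_neg e (n₀ x), he.trans ?_⟩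
  rw [← ENNReal.liminf_const_mul_of_ne_top ENNReal.ofReal_ne_top]
  exact liminf_le_liminf
    (.of_forall fun k => hμ.lintegral_energy_orient_le ν hn₀meas hn₀sph (hw k))

end Lifting

theorem frobNorm_outer_self_sub_outer_self {d : ℕ} {a b : EuclideanSpace ℝ (Fin d)}
    (ha : ‖a‖ = 1) (hb : ‖b‖ = 1) :
    frobNorm (outer a a - outer b b) = sqrt 2 * sin (angle a b) := by
  have hexpand (i j : Fin d) : (outer a a - outer b b) i j ^ 2 = a i * a i * (a j * a j)
      + b i * b i * (b j * b j) - 2 * (a i * b i * (a j * b j)) := by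
    simp only [outer, Pi.sub_apply]
    ring
  have hinner (u v : EuclideanSpace ℝ (Fin d)) : ∑ i, u i * v i = ⟪u, v⟫ := by
    simp only [PiLp.inner_apply, RCLike.inner_apply, conj_trivial, mul_comm]
  have hself {u : EuclideanSpace ℝ (Fin d)} (hu : ‖u‖ = 1) : ⟪u, u⟫ = 1 :=
    inner_self_eq_one_of_norm_eq_one hu
  have hsum : ∑ i, ∑ j, (outer a a - outer b b) i j ^ 2 =
      2 * (⟪a, a⟫ * ⟪b, b⟫ - ⟪a, b⟫ * ⟪a, b⟫) := by
    simp only [hexpand, Finset.sum_sub_distrib, Finset.sum_add_distrib, ← Finset.mul_sum,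
      ← Finset.sum_mul, hinner, hself ha, hself hb]
    ring
  have hsin := sin_angle_mul_norm_mul_norm a b
  rw [ha, hb, mul_one, mul_one] at hsin
  rw [frobNorm, hsum, sqrt_mul two_pos.le, hsin]

theorem one_div_sqrt_two_mul_frobNorm {d : ℕ} {a b : EuclideanSpace ℝ (Fin d)}
    (ha : ‖a‖ = 1) (hb : ‖b‖ = 1) :
    1 / sqrt 2 * frobNorm (outer a a - outer b b) = sin (angle a b) := by
  rw [frobNorm_outer_self_sub_outer_self ha hb, ← mul_assoc, one_div_mul_cancel (by positivity),
    one_mul]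

theorem ofReal_div_mul {a : ℝ} (ha : 0 ≤ a) (r s : ℝ) :
    ENNReal.ofReal (a / r * s) = ENNReal.ofReal a * ENNReal.ofReal (s / r) := by
  rw [← ENNReal.ofReal_mul ha, div_mul_eq_mul_div, mul_div_assoc]

theorem euclidean_lifting_estimate
    (N d : ℕ) (hN : 1 ≤ N) (hd : 2 ≤ d)
    (Ω : Set (EuclideanSpace ℝ (Fin N))) (hΩ : IsOpen Ω)
    (n₀ : EuclideanSpace ℝ (Fin N) → EuclideanSpace ℝ (Fin d))
    (hn₀meas : Measurable n₀) (hn₀sph : ∀ x, ‖n₀ x‖ = 1)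
    (ρ : ℕ → ℝ → ℝ) (hρmeas : ∀ k, Measurable (ρ k))
    (hρnonneg : ∀ k, ∀ r > (0 : ℝ), 0 ≤ ρ k r)
    (hρint : ∀ k, ∫⁻ x : EuclideanSpace ℝ (Fin N), ENNReal.ofReal (ρ k ‖x‖) = 1)
    (hρconc : ∀ h > (0 : ℝ), Tendsto
      (fun k => ∫⁻ x in {x : EuclideanSpace ℝ (Fin N) | h < ‖x‖}, ENNReal.ofReal (ρ k ‖x‖))
      atTop (nhds 0)) :
    ∃ n : EuclideanSpace ℝ (Fin N) → EuclideanSpace ℝ (Fin d),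
      Measurable n ∧ (∀ x, ‖n x‖ = 1) ∧
      (∀ᵐ x ∂(volume.restrict Ω), n x = n₀ x ∨ n x = -n₀ x) ∧
      liminf (fun k => ∫⁻ x in Ω, ∫⁻ y in Ω,
          ENNReal.ofReal (‖n x - n y‖ / ‖x - y‖ * ρ k ‖x - y‖)) atTop ≤
      ENNReal.ofReal (1 + 2 / π) * liminf (fun k => ∫⁻ x in Ω, ∫⁻ y in Ω,
          ENNReal.ofReal ((1 / Real.sqrt 2) *
            frobNorm (outer (n₀ x) (n₀ x) - outer (n₀ y) (n₀ y)) / ‖x - y‖ * ρ k ‖x - y‖))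
        atTop := by
  obtain ⟨n, hn, hsign, hle⟩ := euclidean_lifting_estimate_general (volume.restrict Ω) hn₀meas
    hn₀sph (w := fun k x y => ENNReal.ofReal (ρ k ‖x - y‖ / ‖x - y‖)) fun k =>
      (((hρmeas k).comp (by fun_prop)).div (by fun_prop)).ennreal_ofReal
  refine ⟨n, hn, fun x => ?_, ae_of_all _ hsign, ?_⟩
  · rcases hsign x with hx | hx <;> simp only [hx, norm_neg, hn₀sph]
  · simpa only [one_div_sqrt_two_mul_frobNorm, hn₀sph, ofReal_div_mul, norm_nonneg,
      sin_angle_nonneg, ofReal_norm] using hle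
end
end

section
/- Let d ≥ 2 and let I ⊆ ℝ be an open interval. Let m : ℝ → S^{d-1} and suppose V := sup { Σ_{i=0}^{k-1} (1/√2)·‖m(t_{i+1})⊗m(t_{i+1}) − m(t_i)⊗m(t_i)‖ : k ∈ ℕ, t_0 ≤ t_1 ≤ … ≤ t_k, all t_i ∈ I } < ∞, where ‖·‖ is the Frobenius norm on d×d matrices. Then there exists n : ℝ → S^{d-1} with n(t) ∈ {m(t), −m(t)} for all t ∈ I, such that sup { Σ_{i=0}^{k-1} ‖n(t_{i+1}) − n(t_i)‖_{ℝ^d} : k ∈ ℕ, t_0 ≤ t_1 ≤ … ≤ t_k, all t_i ∈ I } ≤ √2 · V. -/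
/-!
STATEMENT 3: One-dimensional Euclidean lifting with the optimal constant √2 for the
physical (tensorial) embedding `[n] ↦ (1/√2) n ⊗ n`: on an open interval `I ⊆ ℝ`, a map
of bounded tensorial pointwise variation admits a choice of signs `n` whose Euclidean
pointwise variation on `I` is at most `√2` times the tensorial variation.
-/

noncomputable section
open Real
open scoped ENNReal RealInnerProductSpace

/-!
Choosing the signs so that consecutive vectors have nonnegative inner product makes
`n` expand distances by at most `√2` relative to the tensor map: for unit vectors with
`0 ≤ ⟪v, w⟫`,
`‖v - w‖ ^ 2 = 2 (1 - ⟪v, w⟫) ≤ 2 (1 - ⟪v, w⟫ ^ 2) = ‖v ⊗ v - w ⊗ w‖ ^ 2`.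
Along a finite set of times such signs are chosen greedily from left to right. The sign
patterns form the compact space `{±1}^I`, and a bound on the variation over a finite set of times
is a closed condition on the pattern, so one pattern satisfies all of these bounds at once.
-/

open scoped TensorProduct

section Variation

variable {α E F : Type*} [LinearOrder α] [PseudoEMetricSpace E] [PseudoEMetricSpace F]

lemma eVariationOn_eq_iSup_monotone (f : α → E) (s : Set α) :
    eVariationOn f s = ⨆ (k : ℕ) (t : ℕ → α) (_ : Monotone t) (_ : ∀ i ≤ k, t i ∈ s),
      ∑ i ∈ Finset.range k, edist (f (t (i + 1))) (f (t i)) := by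
  apply le_antisymm
  · refine iSup_le fun ⟨k, t, ht, hts⟩ => ?_
    exact le_iSup₂_of_le k t (le_iSup₂_of_le ht (fun i _ => hts i) le_rfl)
  · exact iSup₂_le fun k t => iSup₂_le fun ht hts =>
      eVariationOn.sum_le_of_monotoneOn_Iic (ht.monotoneOn _) hts

lemma eVariationOn_eq_iSup_finset (f : α → E) (s : Set α) :
    eVariationOn f s = ⨆ A : {A : Finset α // (A : Set α) ⊆ s}, eVariationOn f A := by
  apply le_antisymm
  · refine iSup_le fun ⟨k, t, ht, hts⟩ => ?_
    let A : Finset α := (Finset.range (k + 1)).image t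
    have hA : (A : Set α) ⊆ s := by
      simpa [A, Set.subset_def] using fun i _ => hts i
    have htA : ∀ i ≤ k, t i ∈ (A : Set α) := fun i hi =>
      Finset.mem_image_of_mem t (Finset.mem_range_succ_iff.2 hi)
    exact le_iSup_of_le ⟨A, hA⟩
      (eVariationOn.sum_le_of_monotoneOn_Iic (ht.monotoneOn _) htA)
  · exact iSup_le fun A => eVariationOn.mono f A.2

lemma eVariationOn_insert_of_isGreatest (f : α → E) {s : Set α} {a b : α}
    (hb : IsGreatest s b) (hba : b ≤ a) :
    eVariationOn f (insert a s) = eVariationOn f s + edist (f b) (f a) := by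
  have hmin : IsLeast {b, a} b := by simpa [IsLeast, lowerBounds] using hba
  have hunion : insert a s = s ∪ {b, a} := by
    rw [Set.union_insert, Set.union_singleton,
      Set.insert_eq_of_mem (Set.mem_insert_of_mem a hb.1)]
  rw [hunion, eVariationOn.union f hb hmin, eVariationOn.pair]

variable {K : α → Type*} {Φ : ∀ t, K t → E} {s : Set α}

lemma exists_eVariationOn_finset_le_mul [∀ t, Nonempty (K t)] {g : α → F} {C : ℝ≥0∞}
    (hΦ : ∀ a ∈ s, ∀ b ∈ s, a < b → ∀ k : K a, ∃ l : K b,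
      edist (Φ a k) (Φ b l) ≤ C * edist (g a) (g b))
    (A : Finset α) (hA : (A : Set α) ⊆ s) :
    ∃ σ : ∀ t, K t, eVariationOn (fun t => Φ t (σ t)) A ≤ C * eVariationOn g A := by
  induction A using Finset.induction_on_max with
  | empty => exact ⟨fun _ => Classical.arbitrary _, by simp⟩
  | insert a A haA ih =>
    obtain ⟨haS, hAS⟩ : a ∈ s ∧ (A : Set α) ⊆ s := by
      simpa [Set.insert_subset_iff] using hA
    obtain ⟨σ, hσ⟩ := ih hAS
    rcases A.eq_empty_or_nonempty with rfl | hne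
    · exact ⟨σ, by simp⟩
    have hmax := A.isGreatest_max' hne
    set b := A.max' hne
    have hba : b < a := haA b hmax.1
    obtain ⟨l, hl⟩ := hΦ b (hAS hmax.1) a haS hba (σ b)
    have hold : eVariationOn (fun t => Φ t (Function.update σ a l t)) A =
        eVariationOn (fun t => Φ t (σ t)) A :=
      eVariationOn.congr fun t ht => by simp [(haA t ht).ne]
    refine ⟨Function.update σ a l, ?_⟩
    rw [Finset.coe_insert, eVariationOn_insert_of_isGreatest _ hmax hba.le,
      eVariationOn_insert_of_isGreatest _ hmax hba.le, mul_add, hold]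
    exact add_le_add hσ (by simpa [hba.ne] using hl)

variable [∀ t, TopologicalSpace (K t)]

lemma isClosed_setOf_eVariationOn_le (hΦ : ∀ t ∈ s, Continuous (Φ t)) (C : ℝ≥0∞) :
    IsClosed {σ : ∀ t, K t | eVariationOn (fun t => Φ t (σ t)) s ≤ C} := by
  have hcont : ∀ t ∈ s, Continuous fun σ : ∀ t, K t => Φ t (σ t) := fun t ht =>
    (hΦ t ht).comp (continuous_apply t)
  simp only [eVariationOn, iSup_le_iff, Set.ofPred_forall]
  refine isClosed_iInter fun ⟨_, _, _, hts⟩ => isClosed_le ?_ continuous_const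
  exact continuous_finsetSum _ fun i _ =>
    (hcont _ (hts (i + 1))).edist (hcont _ (hts i))

lemma exists_eVariationOn_le_of_forall_finset [∀ t, CompactSpace (K t)]
    (hΦ : ∀ t ∈ s, Continuous (Φ t)) {C : ℝ≥0∞}
    (hfin : ∀ A : Finset α, (A : Set α) ⊆ s →
      ∃ σ : ∀ t, K t, eVariationOn (fun t => Φ t (σ t)) A ≤ C) :
    ∃ σ : ∀ t, K t, eVariationOn (fun t => Φ t (σ t)) s ≤ C := by
  let Good : {A : Finset α // (A : Set α) ⊆ s} → Set (∀ t, K t) := fun A =>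
    {σ | eVariationOn (fun t => Φ t (σ t)) A ≤ C}
  have hclosed : ∀ A, IsClosed (Good A) := fun A =>
    isClosed_setOf_eVariationOn_le (fun t ht => hΦ t (A.2 ht)) C
  have hdirected : Directed (· ⊇ ·) Good := fun A B =>
    ⟨⟨A.1 ∪ B.1, by simpa using ⟨A.2, B.2⟩⟩,
      fun _ hσ => (eVariationOn.mono _ (by simp)).trans hσ,
      fun _ hσ => (eVariationOn.mono _ (by simp)).trans hσ⟩
  have : Nonempty {A : Finset α // (A : Set α) ⊆ s} := ⟨⟨∅, by simp⟩⟩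
  obtain ⟨σ, hσ⟩ := IsCompact.nonempty_iInter_of_directed_nonempty_isCompact_isClosed
    Good hdirected (fun A => hfin A.1 A.2) (fun A => (hclosed A).isCompact) hclosed
  refine ⟨σ, ?_⟩
  rw [eVariationOn_eq_iSup_finset]
  exact iSup_le (Set.mem_iInter.1 hσ)

theorem exists_eVariationOn_le_mul [∀ t, CompactSpace (K t)] [∀ t, Nonempty (K t)]
    (hcont : ∀ t ∈ s, Continuous (Φ t)) {g : α → F} {C : ℝ≥0∞}
    (hΦ : ∀ a ∈ s, ∀ b ∈ s, a < b → ∀ k : K a, ∃ l : K b,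
      edist (Φ a k) (Φ b l) ≤ C * edist (g a) (g b)) :
    ∃ σ : ∀ t, K t, eVariationOn (fun t => Φ t (σ t)) s ≤ C * eVariationOn g s := by
  refine exists_eVariationOn_le_of_forall_finset hcont fun A hA => ?_
  obtain ⟨σ, hσ⟩ := exists_eVariationOn_finset_le_mul hΦ A hA
  exact ⟨σ, hσ.trans (mul_le_mul_right (eVariationOn.mono g hA) C)⟩

end Variation

section Tensor

variable {E F : Type*} [NormedAddCommGroup E] [InnerProductSpace ℝ E]
  [NormedAddCommGroup F] [InnerProductSpace ℝ F]

lemma norm_tmul_sub_tmul_sq (v w : E) (x y : F) :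
    ‖v ⊗ₜ[ℝ] x - w ⊗ₜ[ℝ] y‖ ^ 2 =
      ‖v‖ ^ 2 * ‖x‖ ^ 2 - 2 * (⟪v, w⟫ * ⟪x, y⟫) + ‖w‖ ^ 2 * ‖y‖ ^ 2 := by
  rw [norm_sub_sq_real, TensorProduct.inner_tmul, TensorProduct.norm_tmul,
    TensorProduct.norm_tmul, mul_pow, mul_pow]

lemma norm_mul_norm_sub_le_norm_tmul_self_sub {v w : E} (hnorm : ‖v‖ = ‖w‖)
    (hinner : 0 ≤ ⟪v, w⟫) :
    ‖v‖ * ‖v - w‖ ≤ ‖v ⊗ₜ[ℝ] v - w ⊗ₜ[ℝ] w‖ := by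
  have hcs : ⟪v, w⟫ ≤ ‖v‖ ^ 2 := by
    simpa [← hnorm, sq] using real_inner_le_norm v w
  refine le_of_sq_le_sq ?_ (norm_nonneg _)
  calc (‖v‖ * ‖v - w‖) ^ 2 = 2 * ((‖v‖ ^ 2 - ⟪v, w⟫) * ‖v‖ ^ 2) := by
        rw [mul_pow, norm_sub_sq_real, ← hnorm]; ring
    _ ≤ 2 * ((‖v‖ ^ 2 - ⟪v, w⟫) * (‖v‖ ^ 2 + ⟪v, w⟫)) := by
        have := sub_nonneg.2 hcs
        gcongr
        linarith
    _ = ‖v ⊗ₜ[ℝ] v - w ⊗ₜ[ℝ] w‖ ^ 2 := by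
        rw [norm_tmul_sub_tmul_sq, ← hnorm]; ring

/-- The physical embedding `v ↦ (1/√2) v ⊗ v` of vectors up to sign into Q-tensors. The Hilbert
tensor product `E ⊗ E` stands for the space of matrices, its norm being the Frobenius norm. -/
def physicalEmbedding (v : E) : E ⊗[ℝ] E := (1 / √2) • (v ⊗ₜ[ℝ] v)

lemma edist_physicalEmbedding (v w : E) :
    edist (physicalEmbedding v) (physicalEmbedding w) =
      ENNReal.ofReal (1 / √2 * ‖v ⊗ₜ[ℝ] v - w ⊗ₜ[ℝ] w‖) := by
  rw [edist_dist, dist_eq_norm, physicalEmbedding, physicalEmbedding, ← smul_sub,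
    norm_smul_of_nonneg (by positivity)]

lemma physicalEmbedding_units_smul (ε : ℤˣ) (v : E) :
    physicalEmbedding (ε • v) = physicalEmbedding v := by
  rcases Int.units_eq_one_or ε with rfl | rfl <;>
    simp [physicalEmbedding, TensorProduct.neg_tmul, TensorProduct.tmul_neg]

lemma edist_le_sqrt_two_mul_edist_physicalEmbedding {v w : E} (hv : ‖v‖ = 1) (hw : ‖w‖ = 1)
    (hinner : 0 ≤ ⟪v, w⟫) :
    edist v w ≤
      ENNReal.ofReal √2 * edist (physicalEmbedding v) (physicalEmbedding w) := by
  rw [edist_physicalEmbedding, ← ENNReal.ofReal_mul (Real.sqrt_nonneg 2), ← mul_assoc,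
    mul_one_div_cancel (by positivity), one_mul, edist_dist, dist_eq_norm]
  apply ENNReal.ofReal_le_ofReal
  simpa [hv] using norm_mul_norm_sub_le_norm_tmul_self_sub (hv.trans hw.symm) hinner

lemma exists_units_smul_inner_nonneg (v w : E) : ∃ ε : ℤˣ, 0 ≤ ⟪v, ε • w⟫ := by
  rcases le_total 0 ⟪v, w⟫ with h | h
  · exact ⟨1, by simpa using h⟩
  · exact ⟨-1, by simpa using h⟩

lemma exists_units_smul_edist_le {v w : E} (hv : ‖v‖ = 1) (hw : ‖w‖ = 1) (ε : ℤˣ) :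
    ∃ δ : ℤˣ, edist (ε • v) (δ • w) ≤
      ENNReal.ofReal √2 * edist (physicalEmbedding v) (physicalEmbedding w) := by
  obtain ⟨δ, hδ⟩ := exists_units_smul_inner_nonneg (ε • v) w
  refine ⟨δ, ?_⟩
  simpa only [physicalEmbedding_units_smul] using
    edist_le_sqrt_two_mul_edist_physicalEmbedding
      ((norm_units_zsmul ε v).trans hv) ((norm_units_zsmul δ w).trans hw) hδ

theorem one_dim_euclidean_lifting_general {α : Type*} [LinearOrder α] {I : Set α} {m : α → E}
    (hm : ∀ t ∈ I, ‖m t‖ = 1) :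
    ∃ n : α → E, (∀ t, n t = m t ∨ n t = -m t) ∧
      eVariationOn n I ≤
        ENNReal.ofReal √2 * eVariationOn (fun t => physicalEmbedding (m t)) I := by
  obtain ⟨ε, hε⟩ := exists_eVariationOn_le_mul (Φ := fun t (ε : ℤˣ) => ε • m t)
    (fun _ _ => continuous_of_discreteTopology)
    fun a ha b hb _ => exists_units_smul_edist_le (hm a ha) (hm b hb)
  refine ⟨fun t => ε t • m t, fun t => ?_, hε⟩
  rcases Int.units_eq_one_or (ε t) with h | h <;> simp [h]

end Tensor

section Frobenius

variable {d : ℕ}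

lemma frobNorm_outer_sub_outer (v w x y : EuclideanSpace ℝ (Fin d)) :
    frobNorm (outer v x - outer w y) = ‖v ⊗ₜ[ℝ] x - w ⊗ₜ[ℝ] y‖ := by
  rw [frobNorm, Real.sqrt_eq_iff_eq_sq (by positivity) (norm_nonneg _), norm_tmul_sub_tmul_sq]
  simp only [EuclideanSpace.real_norm_sq_eq, PiLp.inner_apply, RCLike.inner_apply, conj_trivial,
    Finset.sum_mul_sum]
  simp only [Finset.mul_sum, ← Finset.sum_sub_distrib, ← Finset.sum_add_distrib]
  refine Finset.sum_congr rfl fun i _ => Finset.sum_congr rfl fun j _ => ?_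
  simp only [outer, Pi.sub_apply]
  ring

lemma ofReal_frobNorm_outer_self_sub (v w : EuclideanSpace ℝ (Fin d)) :
    ENNReal.ofReal (1 / √2 * frobNorm (outer v v - outer w w)) =
      edist (physicalEmbedding v) (physicalEmbedding w) := by
  rw [frobNorm_outer_sub_outer, edist_physicalEmbedding]

end Frobenius

theorem one_dim_euclidean_lifting
    (d : ℕ) (hd : 2 ≤ d)
    (I : Set ℝ) (hIopen : IsOpen I) (hIinterval : I.OrdConnected)
    (m : ℝ → EuclideanSpace ℝ (Fin d)) (hm : ∀ t, ‖m t‖ = 1)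
    (V : ℝ≥0∞)
    (hV : V = ⨆ (k : ℕ) (t : ℕ → ℝ) (_ : Monotone t) (_ : ∀ i ≤ k, t i ∈ I),
      ∑ i ∈ Finset.range k, ENNReal.ofReal ((1 / Real.sqrt 2) *
        frobNorm (outer (m (t (i + 1))) (m (t (i + 1))) - outer (m (t i)) (m (t i)))))
    (hVfin : V ≠ ⊤) :
    ∃ n : ℝ → EuclideanSpace ℝ (Fin d),
      (∀ t, ‖n t‖ = 1) ∧
      (∀ t ∈ I, n t = m t ∨ n t = -m t) ∧
      (⨆ (k : ℕ) (t : ℕ → ℝ) (_ : Monotone t) (_ : ∀ i ≤ k, t i ∈ I),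
        ∑ i ∈ Finset.range k, ENNReal.ofReal ‖n (t (i + 1)) - n (t i)‖) ≤
      ENNReal.ofReal (Real.sqrt 2) * V := by
  obtain ⟨n, hn, hvar⟩ := one_dim_euclidean_lifting_general fun t (_ : t ∈ I) => hm t
  refine ⟨n, fun t => ?_, fun t _ => hn t, ?_⟩
  · rcases hn t with h | h <;> simp [h, hm]
  · simpa only [hV, ofReal_frobNorm_outer_self_sub, ← dist_eq_norm, ← edist_dist,
      eVariationOn_eq_iSup_monotone] using hvar
end
end

section
/- Let d ≥ 2. For all n, m ∈ S^{d-1}, setting θ = arccos⟪n, m⟫ ∈ [0, π], it holds ∫_{SO(d)} arccos⟪F(Rn), F(Rm)⟫ dμ(R) = (2/π) · θ · (π − θ). -/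
noncomputable section
open MeasureTheory Real Filter
open scoped ENNReal RealInnerProductSpace

instance {m n : Type*} : MeasurableSpace (Matrix m n ℝ) := MeasurableSpace.pi

/-- The special orthogonal group `SO(d)` as matrices. -/
abbrev SOd (d : ℕ) := Matrix.specialOrthogonalGroup (Fin d) ℝ

/-- The last coordinate `⟪x, e_d⟫` of a vector `x ∈ ℝ^d`. -/
def lastCoord {d : ℕ} (x : EuclideanSpace ℝ (Fin d)) : ℝ :=
  if h : 0 < d then x ⟨d - 1, Nat.sub_lt h Nat.one_pos⟩ else 0

/-- `F : S^{d-1} → S^{d-1}`, `F(x) = x` if `⟪x, e_d⟫ ≥ 0` and `F(x) = -x` otherwise. -/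
def Fsym {d : ℕ} (x : EuclideanSpace ℝ (Fin d)) : EuclideanSpace ℝ (Fin d) :=
  if 0 ≤ lastCoord x then x else -x

/-- Action of a matrix on `ℝ^d` (Euclidean space) by matrix-vector multiplication. -/
def rotAct {d : ℕ} (R : Matrix (Fin d) (Fin d) ℝ) (x : EuclideanSpace ℝ (Fin d)) :
    EuclideanSpace ℝ (Fin d) :=
  (EuclideanSpace.equiv (Fin d) ℝ).symm (R.mulVec (EuclideanSpace.equiv (Fin d) ℝ x))

/-- Action of `R ∈ SO(d)` on `ℝ^d`. -/
def rot {d : ℕ} (R : SOd d) (x : EuclideanSpace ℝ (Fin d)) : EuclideanSpace ℝ (Fin d) :=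
  rotAct (R : Matrix (Fin d) (Fin d) ℝ) x

/-!
Only the sign of the last coordinate matters: off the null set where `⟪Rn, e_d⟫` or `⟪Rm, e_d⟫`
vanishes, `arccos ⟪F(Rn), F(Rm)⟫` is `π - θ` if these two numbers have opposite signs and `θ`
otherwise. Since `⟪Rn, e_d⟫ = ⟪Rᵀe_d, n⟫`, and the law of `Rᵀe_d` is rotation invariant, it remains
to see that for a rotation-invariant random vector `v ≠ 0` the signs of `⟪v, n⟫` and `⟪v, m⟫` differ
with probability `θ / π`. Average over the rotations of the plane spanned by `n` and `m`: for a
fixed `v`, the numbers `⟪v, n⟫` and `⟪v, m⟫` become `r cos (t - α)` and `r cos (t + θ - α)`, whose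
signs differ for a set of `t` of measure `θ` in each period `π`. The integral is therefore
`(θ / π) (π - θ) + (1 - θ / π) θ`.
-/

open InnerProductGeometry NormedSpace

lemma lintegral_ofReal_ite_const {Ω : Type*} [MeasurableSpace Ω] {μ : Measure Ω}
    [IsProbabilityMeasure μ] {P : Ω → Prop} [DecidablePred P] (hP : MeasurableSet {ω | P ω})
    {p a b : ℝ} (hp : μ {ω | P ω} = ENNReal.ofReal p) (hp0 : 0 ≤ p) (ha : 0 ≤ a) (hb : 0 ≤ b) :
    ∫⁻ ω, ENNReal.ofReal (if P ω then a else b) ∂μ = ENNReal.ofReal (p * a + (1 - p) * b) := by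
  have hp1 : p ≤ 1 := ENNReal.ofReal_le_one.mp (hp ▸ prob_le_one)
  have hcompl : μ {ω | P ω}ᶜ = ENNReal.ofReal (1 - p) := by
    rw [prob_compl_eq_one_sub hP, hp, ENNReal.ofReal_sub _ hp0, ENNReal.ofReal_one]
  have hif : ∀ ω ∈ {ω | P ω}, ENNReal.ofReal (if P ω then a else b) = ENNReal.ofReal a :=
    fun ω (hω : P ω) ↦ by rw [if_pos hω]
  have helse : ∀ ω ∈ {ω | P ω}ᶜ, ENNReal.ofReal (if P ω then a else b) = ENNReal.ofReal b :=
    fun ω (hω : ¬P ω) ↦ by rw [if_neg hω]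
  rw [← lintegral_add_compl _ hP, setLIntegral_congr_fun hP hif,
    setLIntegral_congr_fun hP.compl helse, setLIntegral_const, setLIntegral_const, hp, hcompl,
    ← ENNReal.ofReal_mul ha, ← ENNReal.ofReal_mul hb,
    ← ENNReal.ofReal_add (mul_nonneg ha hp0) (mul_nonneg hb (by linarith)), mul_comm a, mul_comm b]

section RotationInvariance

variable {V : Type*} [NormedAddCommGroup V] [InnerProductSpace ℝ V]

/-- The great circle through `n` in direction `w`, parametrized by arc length when `n` and `w` are
orthonormal. -/
def greatCircle (n w : V) (t : ℝ) : V := cos t • n + sin t • w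

lemma inner_greatCircle_greatCircle {n w : V} (hn : ‖n‖ = 1) (hw : ‖w‖ = 1) (hnw : ⟪n, w⟫ = 0)
    (s t : ℝ) : ⟪greatCircle n w s, greatCircle n w t⟫ = cos (s - t) := by
  simp only [greatCircle, inner_add_left, inner_add_right, real_inner_smul_right,
    real_inner_self_eq_norm_sq, real_inner_comm, hn, hw, hnw, cos_sub]
  ring

lemma norm_greatCircle {n w : V} (hn : ‖n‖ = 1) (hw : ‖w‖ = 1) (hnw : ⟪n, w⟫ = 0) (t : ℝ) :
    ‖greatCircle n w t‖ = 1 := by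
  rw [norm_eq_sqrt_real_inner, inner_greatCircle_greatCircle hn hw hnw, sub_self, cos_zero,
    sqrt_one]

lemma reflection_span_greatCircle {n w : V} (hn : ‖n‖ = 1) (hw : ‖w‖ = 1) (hnw : ⟪n, w⟫ = 0)
    (s t : ℝ) : (ℝ ∙ greatCircle n w s).reflection (greatCircle n w t) =
      greatCircle n w (2 * s - t) := by
  obtain ⟨x, rfl⟩ : ∃ x, t = s - x := ⟨s - t, by ring⟩
  rw [Submodule.reflection_singleton_apply, inner_greatCircle_greatCircle hn hw hnw,
    norm_greatCircle hn hw hnw]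
  have hcos : cos (s + x) = 2 * cos x * cos s - cos (s - x) := by rw [cos_add, cos_sub]; ring
  have hsin : sin (s + x) = 2 * cos x * sin s - sin (s - x) := by rw [sin_add, sin_sub]; ring
  simp only [greatCircle, show 2 * s - (s - x) = s + x by ring, sub_sub_cancel, hcos, hsin,
    RCLike.ofReal_real_eq_id, id_eq]
  module

lemma exists_rotation_greatCircle_add [FiniteDimensional ℝ V] {n w : V} (hn : ‖n‖ = 1)
    (hw : ‖w‖ = 1) (hnw : ⟪n, w⟫ = 0) (t : ℝ) :
    ∃ g : V ≃ₗᵢ[ℝ] V, LinearMap.det (g : V →ₗ[ℝ] V) = 1 ∧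
      ∀ s, g (greatCircle n w s) = greatCircle n w (s + t) := by
  have hdet (s : ℝ) : LinearMap.det (ℝ ∙ greatCircle n w s).reflection.toLinearMap =
      (-1) ^ (Module.finrank ℝ V - 1) := by
    have hne : greatCircle n w s ≠ 0 := by
      simp [← norm_ne_zero_iff, norm_greatCircle hn hw hnw]
    rw [Submodule.det_reflection, ← (ℝ ∙ greatCircle n w s).finrank_add_finrank_orthogonal,
      finrank_span_singleton hne, add_tsub_cancel_left]
  -- A rotation is a product of two line reflections, whose determinants agree.
  refine ⟨(ℝ ∙ greatCircle n w 0).reflection.trans (ℝ ∙ greatCircle n w (t / 2)).reflection,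
    ?_, fun s ↦ ?_⟩
  · calc _ = LinearMap.det ((ℝ ∙ greatCircle n w (t / 2)).reflection.toLinearMap ∘ₗ
          (ℝ ∙ greatCircle n w 0).reflection.toLinearMap) := rfl
      _ = 1 := by rw [LinearMap.det_comp, hdet, hdet, ← mul_pow, neg_one_mul, neg_neg, one_pow]
  · rw [LinearIsometryEquiv.trans_apply, reflection_span_greatCircle hn hw hnw,
      reflection_span_greatCircle hn hw hnw]
    congr 1
    ring

lemma exists_inner_greatCircle_eq_mul_cos (v n w : V) :
    ∃ r α : ℝ, ∀ t, ⟪v, greatCircle n w t⟫ = r * cos (t - α) := by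
  let z : ℂ := ⟨⟪v, n⟫, ⟪v, w⟫⟩
  refine ⟨‖z‖, z.arg, fun t ↦ ?_⟩
  calc ⟪v, greatCircle n w t⟫ = cos t * z.re + sin t * z.im := by
        simp [greatCircle, inner_add_right, real_inner_smul_right, z]
    _ = ‖z‖ * cos (t - z.arg) := by
        rw [← Complex.norm_mul_cos_arg, ← Complex.norm_mul_sin_arg, cos_sub]
        ring

lemma exists_greatCircle_angle_eq {n m : V} (hn : ‖n‖ = 1) (hm : ‖m‖ = 1)
    (h : sin (angle n m) ≠ 0) :
    ∃ w : V, ‖w‖ = 1 ∧ ⟪n, w⟫ = 0 ∧ greatCircle n w (angle n m) = m := by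
  set θ := angle n m with hθ
  have hcos : ⟪n, m⟫ = cos θ := inner_eq_cos_angle_of_norm_eq_one hn hm
  have hnorm : ‖m - cos θ • n‖ = sin θ := by
    rw [← sq_eq_sq₀ (norm_nonneg _) (sin_angle_nonneg n m), ← hθ,
      norm_sub_sq_real, real_inner_smul_right, real_inner_comm, hcos, norm_smul, hn, hm, sin_sq]
    simp only [one_pow, norm_eq_abs, mul_one, sq_abs]
    ring
  refine ⟨(sin θ)⁻¹ • (m - cos θ • n), ?_, ?_, ?_⟩
  · rw [← hnorm]
    exact norm_smul_inv_norm (norm_ne_zero_iff.mp (hnorm ▸ h))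
  · simp [real_inner_smul_right, inner_sub_right, hcos, hn]
  · simp [greatCircle, smul_smul, h]

lemma volume_inter_Ioc_eq_of_periodic {T : ℝ} (hT : 0 < T) {A : Set ℝ} (hA : MeasurableSet A)
    (hperiodic : Function.Periodic (· ∈ A) T) (a b : ℝ) :
    volume (A ∩ Set.Ioc a (a + T)) = volume (A ∩ Set.Ioc b (b + T)) := by
  have : VAddInvariantMeasure (AddSubgroup.zmultiples T) ℝ volume :=
    ⟨fun _ _ _ ↦ measure_preimage_add _ _ _⟩
  exact (isAddFundamentalDomain_Ioc hT a).measure_set_eq (isAddFundamentalDomain_Ioc hT b) hA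
    fun k ↦ Set.ext fun t ↦ (hperiodic.map_vadd_zmultiples k t).to_iff

lemma volume_cos_mul_cos_neg_inter_Ioc {θ : ℝ} (h0 : 0 ≤ θ) (hπ : θ ≤ π) (a α : ℝ) :
    volume ({t | cos (t - α) * cos (t + θ - α) < 0} ∩ Set.Ioc a (a + π)) = ENNReal.ofReal θ := by
  have hperiodic : Function.Periodic (· ∈ {t | cos (t - α) * cos (t + θ - α) < 0}) π := by
    intro t
    simp only [Set.mem_ofPred_eq, add_right_comm t π θ, add_sub_right_comm _ π α, cos_add_pi,
      neg_mul_neg]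
  have hset : {t | cos (t - α) * cos (t + θ - α) < 0} ∩ Set.Ioc (α - π / 2) (α - π / 2 + π) =
      Set.Ioo (α + π / 2 - θ) (α + π / 2) := by
    ext t
    simp only [Set.mem_inter_iff, Set.mem_ofPred_eq, Set.mem_Ioc, Set.mem_Ioo]
    constructor
    · rintro ⟨hneg, hlt, hle⟩
      have hcos : 0 ≤ cos (t - α) := cos_nonneg_of_mem_Icc ⟨by linarith, by linarith⟩
      refine ⟨?_, ?_⟩
      · by_contra! h
        exact hneg.not_ge (mul_nonneg hcos (cos_nonneg_of_mem_Icc ⟨by linarith, by linarith⟩))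
      · refine lt_of_le_of_ne (by linarith) ?_
        rintro rfl
        simp at hneg
    · rintro ⟨hlt, hlt'⟩
      exact ⟨mul_neg_of_pos_of_neg (cos_pos_of_mem_Ioo ⟨by linarith, by linarith⟩)
        (cos_neg_of_pi_div_two_lt_of_lt (by linarith) (by linarith)), by linarith, by linarith⟩
  rw [volume_inter_Ioc_eq_of_periodic pi_pos (measurableSet_lt (by fun_prop) measurable_const)
    hperiodic a (α - π / 2), hset, Real.volume_Ioo]
  congr 1
  ring

lemma volume_cos_sub_eq_zero (α : ℝ) : volume {t | cos (t - α) = 0} = 0 := by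
  refine Set.Countable.measure_zero ?_ _
  refine (Set.countable_range fun k : ℤ ↦ (2 * k + 1) * π / 2 + α).mono fun t ht ↦ ?_
  obtain ⟨k, hk⟩ := cos_eq_zero_iff.mp ht
  exact ⟨k, by linarith⟩

variable [MeasurableSpace V]

/-- Invariance of a measure on a finite-dimensional Euclidean space under its special orthogonal
group. -/
def IsRotationInvariant (ν : Measure V) : Prop :=
  ∀ g : V ≃ₗᵢ[ℝ] V, LinearMap.det (g : V →ₗ[ℝ] V) = 1 → ν.map g = ν

namespace IsRotationInvariant

variable [BorelSpace V] [FiniteDimensional ℝ V] {ν : Measure V} {n m w : V}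

lemma measure_greatCircle_add (hν : IsRotationInvariant ν) (hn : ‖n‖ = 1)
    (hw : ‖w‖ = 1) (hnw : ⟪n, w⟫ = 0) (s s' t : ℝ) {S : Set (ℝ × ℝ)} (hS : MeasurableSet S) :
    ν {v | (⟪v, greatCircle n w (s + t)⟫, ⟪v, greatCircle n w (s' + t)⟫) ∈ S} =
      ν {v | (⟪v, greatCircle n w s⟫, ⟪v, greatCircle n w s'⟫) ∈ S} := by
  obtain ⟨g, hdet, hg⟩ := exists_rotation_greatCircle_add hn hw hnw t
  conv_lhs => rw [← hν g hdet]
  rw [Measure.map_apply g.continuous.measurable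
    (show MeasurableSet {v | _ ∈ S} from measurableSet_preimage (by fun_prop) hS)]
  simp only [Set.preimage_ofPred_eq, ← hg, LinearIsometryEquiv.inner_map_map]

lemma measure_mul_volume_eq_lintegral [SFinite ν] (hν : IsRotationInvariant ν) (hn : ‖n‖ = 1)
    (hw : ‖w‖ = 1) (hnw : ⟪n, w⟫ = 0) (θ : ℝ) {S : Set (ℝ × ℝ)} (hS : MeasurableSet S)
    (I : Set ℝ) :
    ν {v | (⟪v, n⟫, ⟪v, greatCircle n w θ⟫) ∈ S} * volume I =
      ∫⁻ v, volume ({t | (⟪v, greatCircle n w t⟫, ⟪v, greatCircle n w (t + θ)⟫) ∈ S} ∩ I) ∂ν := by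
  let T : Set (ℝ × V) :=
    {p | (⟪p.2, greatCircle n w p.1⟫, ⟪p.2, greatCircle n w (p.1 + θ)⟫) ∈ S}
  have hT : MeasurableSet T := hS.preimage (by unfold greatCircle; fun_prop)
  have hslice (t : ℝ) : ν (Prod.mk t ⁻¹' T) = ν {v | (⟪v, n⟫, ⟪v, greatCircle n w θ⟫) ∈ S} := by
    have h := hν.measure_greatCircle_add hn hw hnw 0 θ t hS
    simpa [T, add_comm, greatCircle] using h
  calc ν {v | (⟪v, n⟫, ⟪v, greatCircle n w θ⟫) ∈ S} * volume I
      = ((volume.restrict I).prod ν) T := by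
        simp [Measure.prod_apply hT, hslice]
    _ = _ := by
        rw [Measure.prod_apply_symm hT]
        refine lintegral_congr fun v ↦ ?_
        rw [Measure.restrict_apply (hT.preimage measurable_prodMk_right)]
        rfl

lemma measure_inner_eq_zero_inner_ne_zero [SFinite ν] (hν : IsRotationInvariant ν) (hn : ‖n‖ = 1)
    (hw : ‖w‖ = 1) (hnw : ⟪n, w⟫ = 0) : ν {v | ⟪v, n⟫ = 0 ∧ ⟪v, w⟫ ≠ 0} = 0 := by
  have hS : MeasurableSet {p : ℝ × ℝ | p.1 = 0 ∧ p.2 ≠ 0} := by measurability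
  have h := hν.measure_mul_volume_eq_lintegral hn hw hnw (π / 2) hS (Set.Ioc 0 1)
  have hnull (v : V) : volume ({t | ⟪v, greatCircle n w t⟫ = 0 ∧
      ⟪v, greatCircle n w (t + π / 2)⟫ ≠ 0} ∩ Set.Ioc 0 1) = 0 := by
    obtain ⟨r, α, hr⟩ := exists_inner_greatCircle_eq_mul_cos v n w
    refine measure_mono_null (fun t ht ↦ ?_) (volume_cos_sub_eq_zero α)
    simp only [hr, mul_eq_zero] at ht
    grind
  simp only [Set.mem_ofPred_eq, hnull, lintegral_zero, Real.volume_Ioc] at h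
  simpa [greatCircle] using h

lemma measure_inner_eq_zero [SFinite ν] (hν : IsRotationInvariant ν) (h0 : ν {0} = 0)
    (hn : n ≠ 0) : ν {v | ⟪v, n⟫ = 0} = 0 := by
  let b := stdOrthonormalBasis ℝ (ℝ ∙ n)ᗮ
  have hunit : ‖‖n‖⁻¹ • n‖ = 1 := norm_smul_inv_norm hn
  have horth (j) : ⟪n, (b j : V)⟫ = 0 :=
    Submodule.mem_orthogonal_singleton_iff_inner_right.mp (b j).2
  have hb : ∀ᵐ v ∂ν, ∀ j, ⟪v, n⟫ = 0 → ⟪v, (b j : V)⟫ = 0 := by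
    refine ae_all_iff.mpr fun j ↦ ?_
    have h := hν.measure_inner_eq_zero_inner_ne_zero hunit (b.norm_eq_one j)
      (by simp [real_inner_smul_left, horth])
    simpa [real_inner_smul_right, hn, ae_iff] using h
  have hne : ∀ᵐ v ∂ν, v ≠ 0 := by simpa [ae_iff] using h0
  -- A vector orthogonal to `n` is almost surely orthogonal to `(ℝ ∙ n)ᗮ` as well, hence zero.
  refine measure_eq_zero_iff_ae_notMem.mpr ?_
  filter_upwards [hb, hne] with v hv hv0 hvn
  have hmem : v ∈ (ℝ ∙ n)ᗮ := Submodule.mem_orthogonal_singleton_iff_inner_left.mpr hvn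
  have hzero : (⟨v, hmem⟩ : (ℝ ∙ n)ᗮ) = 0 :=
    InnerProductSpace.ext_inner_right_basis b.toBasis fun j ↦ by simpa using hv j hvn
  exact hv0 (congrArg Subtype.val hzero)

lemma measure_inner_mul_inner_greatCircle_neg [SFinite ν] (hν : IsRotationInvariant ν)
    (h0 : ν {0} = 0) (hn : ‖n‖ = 1) (hw : ‖w‖ = 1) (hnw : ⟪n, w⟫ = 0) {θ : ℝ} (hθ : 0 ≤ θ)
    (hθπ : θ ≤ π) :
    ν {v | ⟪v, n⟫ * ⟪v, greatCircle n w θ⟫ < 0} = ENNReal.ofReal (θ / π) * ν Set.univ := by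
  have hS : MeasurableSet {p : ℝ × ℝ | p.1 * p.2 < 0} :=
    measurableSet_lt (by fun_prop) measurable_const
  have hfiber : ∀ᵐ v ∂ν, volume ({t | ⟪v, greatCircle n w t⟫ * ⟪v, greatCircle n w (t + θ)⟫ < 0} ∩
      Set.Ioc 0 (0 + π)) = ENNReal.ofReal θ := by
    filter_upwards [measure_eq_zero_iff_ae_notMem.mp
      (hν.measure_inner_eq_zero h0 (norm_ne_zero_iff.mp (hn.trans_ne one_ne_zero)))] with v hv
    obtain ⟨r, α, hr⟩ := exists_inner_greatCircle_eq_mul_cos v n w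
    have hr0 : r ≠ 0 := by
      rintro rfl
      exact hv (by simpa [greatCircle] using hr 0)
    rw [← volume_cos_mul_cos_neg_inter_Ioc hθ hθπ 0 α]
    simp only [hr, mul_mul_mul_comm r, ← smul_eq_mul (r * r),
      smul_neg_iff_of_pos_left (mul_self_pos.mpr hr0)]
  have h := hν.measure_mul_volume_eq_lintegral hn hw hnw θ hS (Set.Ioc 0 (0 + π))
  simp only [Set.mem_ofPred_eq] at h
  rw [lintegral_congr_ae hfiber, lintegral_const, volume_Ioc, add_sub_cancel_left] at h
  rw [ENNReal.ofReal_div_of_pos pi_pos, div_eq_mul_inv, mul_right_comm, ← h, ← div_eq_mul_inv,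
    ENNReal.mul_div_cancel_right (by simp [pi_pos]) ENNReal.ofReal_ne_top]

theorem measure_inner_mul_inner_neg [SFinite ν] (hν : IsRotationInvariant ν) (h0 : ν {0} = 0)
    (hn : n ≠ 0) (hm : m ≠ 0) :
    ν {v | ⟪v, n⟫ * ⟪v, m⟫ < 0} = ENNReal.ofReal (angle n m / π) * ν Set.univ := by
  by_cases hsin : sin (angle n m) = 0
  · rcases sin_eq_zero_iff_angle_eq_zero_or_angle_eq_pi.mp hsin with h | h <;> rw [h]
    · obtain ⟨-, r, hr, rfl⟩ := angle_eq_zero_iff.mp h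
      have hempty (v : V) : ¬ ⟪v, n⟫ * ⟪v, r • n⟫ < 0 := by
        rw [real_inner_smul_right, mul_left_comm, not_lt]
        exact mul_nonneg hr.le (mul_self_nonneg _)
      simp [hempty]
    · obtain ⟨-, r, hr, rfl⟩ := angle_eq_pi_iff.mp h
      have hae : {v | ⟪v, n⟫ * ⟪v, r • n⟫ < 0} =ᵐ[ν] Set.univ := by
        refine eventuallyEq_univ.mpr ?_
        filter_upwards [measure_eq_zero_iff_ae_notMem.mp (hν.measure_inner_eq_zero h0 hn)] with v hv
        rw [real_inner_smul_right, mul_left_comm]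
        exact mul_neg_of_neg_of_pos hr (mul_self_pos.mpr hv)
      rw [measure_congr hae, div_self pi_ne_zero, ENNReal.ofReal_one, one_mul]
  · have hn1 : ‖normalize n‖ = 1 := norm_normalize hn
    have hm1 : ‖normalize m‖ = 1 := norm_normalize hm
    have hangle : angle (normalize n) (normalize m) = angle n m := by simp
    obtain ⟨w, hw, hnw, hwm⟩ := exists_greatCircle_angle_eq hn1 hm1 (hangle ▸ hsin)
    rw [hangle] at hwm
    have hsign (v : V) : ⟪v, n⟫ * ⟪v, m⟫ < 0 ↔ ⟪v, normalize n⟫ * ⟪v, normalize m⟫ < 0 := by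
      have hpos : 0 < ‖n‖ * ‖m‖ := by positivity
      conv_lhs => rw [← norm_smul_normalize n, ← norm_smul_normalize m, real_inner_smul_right,
        real_inner_smul_right, mul_mul_mul_comm, ← smul_eq_mul (‖n‖ * ‖m‖)]
      exact smul_neg_iff_of_pos_left hpos
    simp only [hsign, ← hwm]
    exact hν.measure_inner_mul_inner_greatCircle_neg h0 hn1 hw hnw (angle_nonneg n m)
      (angle_le_pi n m)

end IsRotationInvariant

end RotationInvariance

section SpecialOrthogonalGroup

open Matrix

variable {d : ℕ}

/-- The `i`-th row of a rotation matrix, that is, the pullback `Rᵀeᵢ` of a basis vector. -/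
def rotationRow (i : Fin d) (R : SOd d) : EuclideanSpace ℝ (Fin d) := WithLp.toLp 2 (R.1 i)

lemma measurable_rotationRow (i : Fin d) : Measurable (rotationRow i) := by
  have hrow : Measurable fun R : SOd d ↦ R.1 i :=
    (measurable_pi_apply i).comp measurable_subtype_coe
  exact (WithLp.measurable_toLp 2 _).comp hrow

lemma inner_rot_rot (R : SOd d) (x y : EuclideanSpace ℝ (Fin d)) :
    ⟪rot R x, rot R y⟫ = ⟪x, y⟫ := by
  have hR : R.1ᵀ * R.1 = 1 := (mem_orthogonalGroup_iff' (Fin d) ℝ).mp R.2.1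
  calc ⟪rot R x, rot R y⟫ = (R.1 *ᵥ y.ofLp) ⬝ᵥ (R.1 *ᵥ x.ofLp) := rfl
    _ = ⟪x, y⟫ := by
      rw [dotProduct_mulVec, ← mulVec_transpose, mulVec_mulVec, hR, one_mulVec]
      rfl

lemma norm_rotationRow (i : Fin d) (R : SOd d) : ‖rotationRow i R‖ = 1 := by
  have hR : R.1 * R.1ᵀ = 1 := (mem_orthogonalGroup_iff (Fin d) ℝ).mp R.2.1
  have hdiag : ⟪rotationRow i R, rotationRow i R⟫ = (R.1 * R.1ᵀ) i i := rfl
  rw [norm_eq_sqrt_real_inner, hdiag, hR, one_apply_eq, sqrt_one]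

lemma lastCoord_rot (hd : 0 < d) (R : SOd d) (x : EuclideanSpace ℝ (Fin d)) :
    lastCoord (rot R x) = ⟪rotationRow ⟨d - 1, Nat.sub_lt hd Nat.one_pos⟩ R, x⟫ := by
  rw [lastCoord, dif_pos hd]
  exact dotProduct_comm (R.1 _) x.ofLp

lemma measurable_lastCoord_rot (x : EuclideanSpace ℝ (Fin d)) :
    Measurable fun R : SOd d ↦ lastCoord (rot R x) := by
  by_cases hd : 0 < d
  · simp only [lastCoord_rot hd]
    exact (measurable_rotationRow _).inner measurable_const
  · simp [lastCoord, hd]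

lemma exists_rotationRow_mul_eq (g : EuclideanSpace ℝ (Fin d) ≃ₗᵢ[ℝ] EuclideanSpace ℝ (Fin d))
    (hg : LinearMap.det (g : EuclideanSpace ℝ (Fin d) →ₗ[ℝ] EuclideanSpace ℝ (Fin d)) = 1) :
    ∃ R₀ : SOd d, ∀ (i : Fin d) (R : SOd d), rotationRow i (R * R₀) = g (rotationRow i R) := by
  let b := EuclideanSpace.basisFun (Fin d) ℝ
  let M : Matrix (Fin d) (Fin d) ℝ := LinearMap.toMatrix b.toBasis b.toBasis g
  have hM : M ∈ Matrix.specialOrthogonalGroup (Fin d) ℝ :=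
    Matrix.mem_specialOrthogonalGroup_iff.mpr
      ⟨g.toMatrix_mem_unitaryGroup b b, (LinearMap.det_toMatrix b.toBasis _).trans hg⟩
  refine ⟨star ⟨M, hM⟩, fun i R ↦ ?_⟩
  have hrow : ((R * star ⟨M, hM⟩ : SOd d) : Matrix _ _ ℝ) i = M *ᵥ R.1 i :=
    vecMul_transpose M (R.1 i)
  calc rotationRow i (R * star ⟨M, hM⟩) = WithLp.toLp 2 (M *ᵥ R.1 i) := congrArg _ hrow
    _ = g (rotationRow i R) := congrArg (WithLp.toLp 2)
      (LinearMap.toMatrix_mulVec_repr b.toBasis b.toBasis g (rotationRow i R))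

lemma isRotationInvariant_map_rotationRow {μ : Measure (SOd d)}
    (hμ : ∀ R₀ : SOd d, μ.map (fun R ↦ R * R₀) = μ) (i : Fin d) :
    IsRotationInvariant (μ.map (rotationRow i)) := by
  intro g hg
  obtain ⟨R₀, hR₀⟩ := exists_rotationRow_mul_eq g hg
  have hmul : Measurable fun R : SOd d ↦ R * R₀ := by
    refine Measurable.subtype_mk ?_
    refine measurable_pi_iff.mpr fun j ↦ measurable_pi_iff.mpr fun k ↦ ?_
    have hentry (l : Fin d) : Measurable fun R : SOd d ↦ R.1 j l :=
      (measurable_pi_apply l).comp ((measurable_pi_apply j).comp measurable_subtype_coe)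
    simp only [mul_apply]
    exact Finset.measurable_sum _ fun l _ ↦ (hentry l).mul_const (R₀.1 l k)
  have hrow := measurable_rotationRow i
  calc (μ.map (rotationRow i)).map g = μ.map (rotationRow i ∘ fun R ↦ R * R₀) := by
        rw [Measure.map_map g.continuous.measurable hrow]
        exact congrArg (μ.map ·) (funext fun R ↦ (hR₀ i R).symm)
    _ = (μ.map fun R ↦ R * R₀).map (rotationRow i) := (Measure.map_map hrow hmul).symm
    _ = μ.map (rotationRow i) := by rw [hμ R₀]

lemma map_rotationRow_singleton_zero (μ : Measure (SOd d)) (i : Fin d) :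
    μ.map (rotationRow i) {0} = 0 := by
  rw [Measure.map_apply (measurable_rotationRow i) (measurableSet_singleton 0)]
  have hempty : rotationRow i ⁻¹' {0} = ∅ := by
    refine Set.eq_empty_of_forall_notMem fun R (hR : rotationRow i R = 0) ↦ ?_
    simpa [hR] using norm_rotationRow i R
  rw [hempty, measure_empty]

lemma arccos_inner_Fsym {x y : EuclideanSpace ℝ (Fin d)} (hx : lastCoord x ≠ 0)
    (hy : lastCoord y ≠ 0) : arccos ⟪Fsym x, Fsym y⟫ =
      if lastCoord x * lastCoord y < 0 then π - arccos ⟪x, y⟫ else arccos ⟪x, y⟫ := by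
  rcases hx.lt_or_gt with hx | hx <;> rcases hy.lt_or_gt with hy | hy <;>
    simp [Fsym, mul_neg_iff, hx, hy, hx.le, hy.le, hx.not_ge, hy.not_ge, hx.not_gt, hy.not_gt,
      arccos_neg]

section InvariantMeasure

variable {μ : Measure (SOd d)} [SFinite μ]
  (hμ : ∀ R₀ : SOd d, μ.map (fun R ↦ R * R₀) = μ)
include hμ

lemma ae_lastCoord_rot_ne_zero (hd : 0 < d) {x : EuclideanSpace ℝ (Fin d)} (hx : x ≠ 0) :
    ∀ᵐ R ∂μ, lastCoord (rot R x) ≠ 0 := by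
  let i : Fin d := ⟨d - 1, Nat.sub_lt hd Nat.one_pos⟩
  have hae := measure_eq_zero_iff_ae_notMem.mp <|
    (isRotationInvariant_map_rotationRow hμ i).measure_inner_eq_zero
      (map_rotationRow_singleton_zero μ i) hx
  filter_upwards [ae_of_ae_map (measurable_rotationRow i).aemeasurable hae] with R hR
  rwa [lastCoord_rot hd]

lemma measure_lastCoord_rot_mul_lastCoord_rot_neg (hd : 0 < d) {x y : EuclideanSpace ℝ (Fin d)}
    (hx : x ≠ 0) (hy : y ≠ 0) :
    μ {R | lastCoord (rot R x) * lastCoord (rot R y) < 0} =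
      ENNReal.ofReal (angle x y / π) * μ Set.univ := by
  let i : Fin d := ⟨d - 1, Nat.sub_lt hd Nat.one_pos⟩
  have hrow := measurable_rotationRow i
  have h := (isRotationInvariant_map_rotationRow hμ i).measure_inner_mul_inner_neg
    (map_rotationRow_singleton_zero μ i) hx hy
  rw [Measure.map_apply hrow (measurableSet_lt (by fun_prop) measurable_const),
    Measure.map_apply hrow .univ, Set.preimage_univ] at h
  simpa only [lastCoord_rot hd, Set.preimage_ofPred_eq] using h

end InvariantMeasure

end SpecialOrthogonalGroup

/-!
STATEMENT 5 (Lemma 3.2 of the paper): for the Haar probability measure μ on SO(d)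
(formalized as any bi-invariant Borel probability measure) and unit vectors n, m,
∫ arccos⟪F(Rn), F(Rm)⟫ dμ(R) = (2/π)·θ·(π−θ) with θ = arccos⟪n, m⟫.
-/

theorem average_geodesic_distance
    (d : ℕ) (hd : 2 ≤ d)
    (μ : Measure (SOd d)) [IsProbabilityMeasure μ]
    (hμleft : ∀ R₀ : SOd d, μ.map (fun R => R₀ * R) = μ)
    (hμright : ∀ R₀ : SOd d, μ.map (fun R => R * R₀) = μ)
    (n m : EuclideanSpace ℝ (Fin d)) (hn : ‖n‖ = 1) (hm : ‖m‖ = 1) :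
    ∫⁻ R, ENNReal.ofReal (Real.arccos ⟪Fsym (rot R n), Fsym (rot R m)⟫) ∂μ =
      ENNReal.ofReal (2 / π * (Real.arccos ⟪n, m⟫ * (π - Real.arccos ⟪n, m⟫))) := by
  have hn0 : n ≠ 0 := norm_ne_zero_iff.mp (hn.trans_ne one_ne_zero)
  have hm0 : m ≠ 0 := norm_ne_zero_iff.mp (hm.trans_ne one_ne_zero)
  have hd0 : 0 < d := by lia
  set θ := arccos ⟪n, m⟫
  have hangle : angle n m = θ := by rw [angle, hn, hm, mul_one, div_one]
  have hθ0 : 0 ≤ θ := arccos_nonneg _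
  have hfold : ∀ᵐ R ∂μ, ENNReal.ofReal (arccos ⟪Fsym (rot R n), Fsym (rot R m)⟫) =
      ENNReal.ofReal (if lastCoord (rot R n) * lastCoord (rot R m) < 0 then π - θ else θ) := by
    filter_upwards [ae_lastCoord_rot_ne_zero hμright hd0 hn0,
      ae_lastCoord_rot_ne_zero hμright hd0 hm0] with R hRn hRm
    rw [arccos_inner_Fsym hRn hRm, inner_rot_rot]
  have hprob : μ {R | lastCoord (rot R n) * lastCoord (rot R m) < 0} = ENNReal.ofReal (θ / π) := by
    rw [measure_lastCoord_rot_mul_lastCoord_rot_neg hμright hd0 hn0 hm0, hangle, measure_univ,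
      mul_one]
  have hmeas : MeasurableSet {R : SOd d | lastCoord (rot R n) * lastCoord (rot R m) < 0} :=
    measurableSet_lt ((measurable_lastCoord_rot n).mul (measurable_lastCoord_rot m))
      measurable_const
  rw [lintegral_congr_ae hfold, lintegral_ofReal_ite_const hmeas hprob (by positivity)
    (sub_nonneg.mpr (arccos_le_pi _)) hθ0]
  congr 1
  field_simp
  ring
end
end
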